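/- arXiv:2110.10458 — 3 statements merged into one kernel-verified Lean document; each statement's English description precedes it below -/
import Mathlib

section
/- For every n ≥ 1: (a) dt_n(α·x) = αⁿ·dt_n(x) for all x ∈ H_n(ℍ_ℂ) and α ∈ ℂ; (b) there exist complex coefficients α_{σ,π}, indexed by pairs of permutations σ,π of {1,…,n}, such that dt_n(x) = Σ_{σ,π} α_{σ,π} · x_{σ(1)π(1)} · x_{σ(2)π(2)} · ⋯ · x_{σ(n)π(n)} for all x ∈ H_n(ℍ_ℂ); (c) for all x, y ∈ H_n(ℍ_ℂ), the function λ ↦ dt_n(λ·y + x) is a complex polynomial in λ of degree at most n whose coefficient at λⁿ is dt_n(y) and whose constant term is dt_n(x). -/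
/-!
Fix all entries of a hermitian matrix except the upper left one, `a`. For `a ≠ 0` the recursion
expresses `dt_{n+1}` through `dt_n` of the Schur complement, whose entries are affine in `a⁻¹`, so
inductively `dt_{n+1}` is `a` times a polynomial in `a⁻¹`. Continuity at `a = 0` leaves only
`a * P + Q`, where `P` and `Q` are noncommutative polynomials in the other entries. The product
`x_{i0} x_{0j}` uses row and column `0` exactly once, and it enters `Q` exactly once; hence every
word of `a * P + Q` uses each row and each column exactly once. Homogeneity and the behaviour on
pencils only depend on the number of factors of these words. The values are scalars because
`dt_{n+1}` is fixed by quaternion conjugation for `a ≠ 0`, hence by density for all `a`.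
-/

noncomputable section

open Matrix

/-- The biquaternions `ℍ_ℂ`: quaternions with complex coefficients. -/
abbrev HC : Type := Quaternion ℂ

/-- The embedding `ℂ ⊆ ℍ_ℂ` as scalar biquaternions. -/
def cq (z : ℂ) : HC := ⟨z, 0, 0, 0⟩

/-- The `ℂ`-linear involution `x ↦ x⋄` (quaternion conjugation). -/
def qdia (x : HC) : HC := ⟨x.re, -x.imI, -x.imJ, -x.imK⟩

/-- Coefficientwise complex conjugation `x ↦ x̄`. -/
def qbar (x : HC) : HC :=
  ⟨starRingEnd ℂ x.re, starRingEnd ℂ x.imI, starRingEnd ℂ x.imJ, starRingEnd ℂ x.imK⟩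

/-- The conjugate-linear involution `x* = (x̄)⋄`. -/
def qstar (x : HC) : HC := qdia (qbar x)

/-- The natural (Euclidean/product) topology on the biquaternions `ℍ_ℂ ≅ ℂ⁴`. -/
instance : TopologicalSpace HC :=
  TopologicalSpace.induced (fun q : HC => (q.re, q.imI, q.imJ, q.imK)) inferInstance

/-- The 2×2 complex matrix `x̂` associated to a biquaternion `x`. -/
def hat (x : HC) : Matrix (Fin 2) (Fin 2) ℂ :=
  !![x.re + Complex.I * x.imI, x.imJ + Complex.I * x.imK;
     -x.imJ + Complex.I * x.imK, x.re - Complex.I * x.imI]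

/-- The `2n × 2n` complex matrix `Â` obtained by replacing every biquaternion entry `a`
of `A` by the 2×2 block `â`. -/
def hatM {n : ℕ} (A : Matrix (Fin n) (Fin n) HC) :
    Matrix (Fin n × Fin 2) (Fin n × Fin 2) ℂ :=
  Matrix.of fun p q => hat (A p.1 q.1) p.2 q.2

/-- `A` is `⋄`-hermitian: `Aᵈ = A`, i.e. `(A j i)⋄ = A i j` for all `i j`.
`H_n(ℍ_ℂ)` is the collection of all such matrices. -/
def IsHerm {n : ℕ} (A : Matrix (Fin n) (Fin n) HC) : Prop :=
  ∀ i j, qdia (A j i) = A i j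

/-- The defining properties of the sequence of determinants `(dt_n)_{n ≥ 1}`:
`D n` plays the role of `dt_{n+1} : H_{n+1}(ℍ_ℂ) → ℍ_ℂ`.
(i) continuity on `H_{n+1}(ℍ_ℂ)`; (ii) `dt₁((x₁₁)) = x₁₁`;
(iii) the inductive formula for `dt_{n+1}` when `x₁₁ ≠ 0`. -/
def IsDtSeq (D : ∀ n : ℕ, Matrix (Fin (n + 1)) (Fin (n + 1)) HC → HC) : Prop :=
  (∀ n : ℕ, ContinuousOn (D n) {A | IsHerm A}) ∧
  (∀ A : Matrix (Fin 1) (Fin 1) HC, IsHerm A → D 0 A = A 0 0) ∧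
  (∀ (n : ℕ) (A : Matrix (Fin (n + 2)) (Fin (n + 2)) HC), IsHerm A → A 0 0 ≠ 0 →
    D (n + 1) A = A 0 0 *
      D n (Matrix.of fun i j : Fin (n + 1) =>
        A i.succ j.succ - Ring.inverse (A 0 0) * A i.succ 0 * A 0 j.succ))

section Laurent

variable {𝕜 E : Type*} [NontriviallyNormedField 𝕜] [AddCommGroup E] [Module 𝕜 E]
  [TopologicalSpace E] [T2Space E] [ContinuousAdd E] [ContinuousSMul 𝕜 E]

theorem eq_of_forall_ne_zero_eq {X : Type*} [TopologicalSpace X] [T2Space X] {f g : 𝕜 → X}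
    (hf : Continuous f) (hg : Continuous g) (h : ∀ a, a ≠ 0 → f a = g a) : f = g :=
  hf.ext_on (dense_compl_singleton 0) hg h

theorem coeff_eq_zero_of_continuous_laurent {f : 𝕜 → E} (hf : Continuous f) {c : ℕ → E} {N : ℕ}
    (h : ∀ a, a ≠ 0 → f a = a • ∑ k ∈ Finset.range (N + 3), a⁻¹ ^ k • c k) : c (N + 2) = 0 := by
  -- Multiplied by `a ^ (N + 1)`, both sides are continuous at `0`, where only `c (N + 2)` survives.
  have hoff : ∀ a : 𝕜, a ≠ 0 →
      a ^ (N + 1) • f a = ∑ k ∈ Finset.range (N + 3), a ^ (N + 2 - k) • c k := by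
    intro a ha
    rw [h a ha, smul_smul, ← pow_succ, Finset.smul_sum]
    refine Finset.sum_congr rfl fun k hk => ?_
    rw [smul_smul, inv_pow, ← pow_sub₀ a ha (Nat.lt_succ_iff.1 (Finset.mem_range.1 hk))]
  have hzero : (0 : 𝕜) ^ (N + 1) • f 0 =
      ∑ k ∈ Finset.range (N + 3), (0 : 𝕜) ^ (N + 2 - k) • c k :=
    congrFun (eq_of_forall_ne_zero_eq
      (f := fun a => a ^ (N + 1) • f a)
      (g := fun a => ∑ k ∈ Finset.range (N + 3), a ^ (N + 2 - k) • c k)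
      (by fun_prop) (by fun_prop) hoff) 0
  rw [Finset.sum_range_succ, Finset.sum_eq_zero fun k hk => ?_] at hzero
  · simpa using hzero.symm
  · rw [zero_pow (Nat.sub_ne_zero_of_lt (Finset.mem_range.1 hk)), zero_smul]

theorem eq_affine_of_continuous_laurent {f : 𝕜 → E} (hf : Continuous f) {c : ℕ → E} {N : ℕ}
    (h : ∀ a, a ≠ 0 → f a = a • ∑ k ∈ Finset.range (N + 2), a⁻¹ ^ k • c k) (a : 𝕜) :
    f a = a • c 0 + c 1 := by
  induction N with
  | zero =>
    refine congrFun (eq_of_forall_ne_zero_eq (g := fun a => a • c 0 + c 1) hf (by fun_prop)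
      fun a ha => ?_) a
    simp [h a ha, Finset.sum_range_succ, smul_smul, ha]
  | succ N ih =>
    refine ih fun a ha => ?_
    rw [h a ha, Finset.sum_range_succ, coeff_eq_zero_of_continuous_laurent hf h, smul_zero,
      add_zero]

end Laurent

section FreeEvaluation

open Polynomial

variable {K m n S T : Type*} [CommSemiring K] [Semiring S] [Algebra K S]
  [Semiring T] [Algebra K T]

variable (K) in
/-- The value of a noncommutative polynomial in the variables `x i j` at the entries of a
matrix `A`. -/
def evalEntries (A : Matrix m n S) : FreeAlgebra K (m × n) →ₐ[K] S :=
  FreeAlgebra.lift K fun p => A p.1 p.2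

@[simp]
theorem evalEntries_ι (A : Matrix m n S) (p : m × n) :
    evalEntries K A (FreeAlgebra.ι K p) = A p.1 p.2 :=
  FreeAlgebra.lift_ι_apply _ _

theorem evalEntries_list_prod (A : Matrix m n S) (L : List (m × n)) :
    evalEntries K A (L.map (FreeAlgebra.ι K)).prod = (L.map fun p => A p.1 p.2).prod := by
  simp [map_list_prod, Function.comp_def]

theorem map_evalEntries (φ : S →ₐ[K] T) (A : Matrix m n S) (F : FreeAlgebra K (m × n)) :
    φ (evalEntries K A F) = evalEntries K (A.map φ) F := by
  have h : φ.comp (evalEntries K A) = evalEntries K (A.map φ) := by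
    ext p
    simp
  exact DFunLike.congr_fun h F

variable (K) in
/-- The noncommutative polynomials all of whose words have row indices `r` and column indices `c`,
counted with multiplicity. -/
def contentSubmodule (r : Multiset m) (c : Multiset n) : Submodule K (FreeAlgebra K (m × n)) :=
  Submodule.span K ((fun L : List (m × n) => (L.map (FreeAlgebra.ι K)).prod) ''
    {L | (L.map Prod.fst : Multiset m) = r ∧ (L.map Prod.snd : Multiset n) = c})

theorem list_prod_mem_contentSubmodule (L : List (m × n)) :
    (L.map (FreeAlgebra.ι K)).prod ∈ contentSubmodule K ↑(L.map Prod.fst) ↑(L.map Prod.snd) :=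
  Submodule.subset_span ⟨L, ⟨rfl, rfl⟩, rfl⟩

theorem ι_mem_contentSubmodule (i : m) (j : n) :
    FreeAlgebra.ι K (i, j) ∈ contentSubmodule K {i} {j} := by
  simpa using list_prod_mem_contentSubmodule (K := K) [(i, j)]

theorem mul_mem_contentSubmodule {r r' : Multiset m} {c c' : Multiset n}
    {F G : FreeAlgebra K (m × n)} (hF : F ∈ contentSubmodule K r c)
    (hG : G ∈ contentSubmodule K r' c') : F * G ∈ contentSubmodule K (r + r') (c + c') := by
  refine Submodule.mul_le.1 ?_ F hF G hG
  rw [contentSubmodule, contentSubmodule, Submodule.span_mul_span, Submodule.span_le]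
  rintro _ ⟨_, ⟨L, ⟨rfl, rfl⟩, rfl⟩, _, ⟨L', ⟨rfl, rfl⟩, rfl⟩, rfl⟩
  simpa using list_prod_mem_contentSubmodule (K := K) (L ++ L')

theorem evalEntries_smul {r : Multiset m} {c : Multiset n} {F : FreeAlgebra K (m × n)}
    (hF : F ∈ contentSubmodule K r c) (a : K) (A : Matrix m n S) :
    evalEntries K (a • A) F = a ^ r.card • evalEntries K A F := by
  refine LinearMap.eqOn_span (f := (evalEntries K (a • A)).toLinearMap)
    (g := a ^ r.card • (evalEntries K A).toLinearMap) ?_ hF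
  rintro _ ⟨L, ⟨rfl, -⟩, rfl⟩
  have h := List.smul_prod (L.map fun p => A p.1 p.2) a
  simpa [evalEntries_list_prod, Function.comp_def] using h.symm

/-- The matrix `X • B + A` over `S[X]`. -/
def pencil (A B : Matrix m n S) : Matrix m n S[X] :=
  of fun i j => C (B i j) * X + C (A i j)

theorem natDegree_evalEntries_pencil_le {r : Multiset m} {c : Multiset n}
    {F : FreeAlgebra K (m × n)} (hF : F ∈ contentSubmodule K r c) (A B : Matrix m n S) :
    (evalEntries K (pencil A B) F).natDegree ≤ r.card := by
  induction hF using Submodule.span_induction with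
  | mem _ hx =>
    obtain ⟨L, ⟨rfl, -⟩, rfl⟩ := hx
    rw [evalEntries_list_prod]
    refine (natDegree_list_prod_le _).trans ((List.sum_le_card_nsmul _ 1 ?_).trans_eq (by simp))
    exact List.forall_mem_map.2 (List.forall_mem_map.2 fun p _ => natDegree_linear_le)
  | zero => simp
  | add F G _ _ hF hG => simpa using natDegree_add_le_of_degree_le hF hG
  | smul a F _ hF => simpa using (natDegree_smul_le a _).trans hF

theorem coeff_card_evalEntries_pencil {r : Multiset m} {c : Multiset n}
    {F : FreeAlgebra K (m × n)} (hF : F ∈ contentSubmodule K r c) (A B : Matrix m n S) :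
    (evalEntries K (pencil A B) F).coeff r.card = evalEntries K B F := by
  induction hF using Submodule.span_induction with
  | mem _ hx =>
    obtain ⟨L, ⟨rfl, -⟩, rfl⟩ := hx
    rw [evalEntries_list_prod, evalEntries_list_prod]
    simpa [Function.comp_def, pencil] using
      coeff_list_prod_of_natDegree_le (L.map fun p => pencil A B p.1 p.2) 1
        (List.forall_mem_map.2 fun p _ => natDegree_linear_le)
  | zero => simp
  | add F G _ _ hF hG => simp [hF, hG]
  | smul a F _ hF => simp [hF]

theorem eval_evalEntries_pencil (A B : Matrix m n S) (F : FreeAlgebra K (m × n)) (z : K) :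
    (evalEntries K (pencil A B) F).eval (algebraMap K S z) = evalEntries K (z • B + A) F := by
  let φ : S[X] →ₐ[K] S :=
    eval₂AlgHom (AlgHom.id K S) (algebraMap K S z) fun x => (Algebra.commutes z x).symm
  have h : (pencil A B).map φ = z • B + A := by
    ext i j
    simp [pencil, φ, Algebra.smul_def, Algebra.commutes, eval₂AlgHom]
  rw [← h, ← map_evalEntries]
  rfl

theorem exists_polynomial_coeff_eq_apply_coeff (φ : S →ₗ[K] K) (q : S[X]) :
    ∃ p : K[X], p.natDegree ≤ q.natDegree ∧ (∀ k, p.coeff k = φ (q.coeff k)) ∧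
      ∀ z, p.eval z = φ (q.eval (algebraMap K S z)) := by
  obtain ⟨p, hcoeff, heval⟩ : ∃ p : K[X], (∀ k, p.coeff k = φ (q.coeff k)) ∧
      ∀ z, p.eval z = φ (q.eval (algebraMap K S z)) := by
    induction q using Polynomial.induction_on' with
    | add q₁ q₂ h₁ h₂ =>
      obtain ⟨p₁, hcoeff₁, heval₁⟩ := h₁
      obtain ⟨p₂, hcoeff₂, heval₂⟩ := h₂
      exact ⟨p₁ + p₂, fun k => by simp [hcoeff₁, hcoeff₂], fun z => by simp [heval₁, heval₂]⟩
    | monomial d s =>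
      refine ⟨monomial d (φ s), fun k => ?_, fun z => ?_⟩
      · simp only [coeff_monomial, apply_ite φ, map_zero]
      · rw [eval_monomial, eval_monomial, ← map_pow, ← Algebra.commutes, ← Algebra.smul_def,
          map_smul, smul_eq_mul, mul_comm]
  refine ⟨p, natDegree_le_iff_coeff_eq_zero.2 fun k hk => ?_, hcoeff, heval⟩
  rw [hcoeff, coeff_eq_zero_of_natDegree_lt hk, map_zero]

theorem exists_ofFn_perm_of_content {k : ℕ} {L : List (Fin k × Fin k)}
    (hrow : (L.map Prod.fst : Multiset (Fin k)) = Finset.univ.val)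
    (hcol : (L.map Prod.snd : Multiset (Fin k)) = Finset.univ.val) :
    ∃ σ π : Equiv.Perm (Fin k), L = List.ofFn fun i => (σ i, π i) := by
  obtain ⟨⟨l, g⟩, rfl⟩ := List.equivSigmaTuple.symm.surjective L
  obtain rfl : l = k := by simpa using congrArg Multiset.card hrow
  have bijective_of_content {h : Fin l → Fin l}
      (hh : (List.ofFn h : Multiset (Fin l)) = Finset.univ.val) : h.Bijective :=
    Finite.injective_iff_bijective.1 <| List.nodup_ofFn.1 <| Multiset.coe_nodup.1 <|
      hh ▸ Finset.univ.nodup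
  rw [List.equivSigmaTuple_symm_apply, List.map_ofFn] at hrow hcol
  exact ⟨.ofBijective _ (bijective_of_content hrow),
    .ofBijective _ (bijective_of_content hcol), rfl⟩

theorem exists_evalEntries_eq_sum_perm {k : ℕ} {F : FreeAlgebra K (Fin k × Fin k)}
    (hF : F ∈ contentSubmodule K Finset.univ.val Finset.univ.val) :
    ∃ c : Equiv.Perm (Fin k) → Equiv.Perm (Fin k) → K, ∀ A : Matrix (Fin k) (Fin k) S,
      evalEntries K A F = ∑ σ, ∑ π, c σ π • (List.ofFn fun i => A (σ i) (π i)).prod := by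
  have hF' : F ∈ Submodule.span K (Set.range fun p : Equiv.Perm (Fin k) × Equiv.Perm (Fin k) =>
      ((List.ofFn fun i => (p.1 i, p.2 i)).map (FreeAlgebra.ι K)).prod) := by
    refine Submodule.span_mono ?_ hF
    rintro _ ⟨L, ⟨hrow, hcol⟩, rfl⟩
    obtain ⟨σ, π, rfl⟩ := exists_ofFn_perm_of_content hrow hcol
    exact ⟨(σ, π), rfl⟩
  obtain ⟨c, rfl⟩ := (Submodule.mem_span_range_iff_exists_fun K).1 hF'
  refine ⟨fun σ π => c (σ, π), fun A => ?_⟩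
  simp only [map_sum, map_smul, evalEntries_list_prod]
  simp only [List.map_ofFn, Function.comp_def, Fintype.sum_prod_type]

end FreeEvaluation

section Schur

open Polynomial FreeAlgebra

variable {K S : Type*} [CommRing K] [Ring S] [Algebra K S] {n : ℕ}

/-- The matrix `A_{i+1,j+1} - t A_{i+1,0} A_{0,j+1}`, which is the Schur complement of `A₀₀` in `A`
for `t = A₀₀⁻¹`. The entry `A₀₀` does not occur, so that `t` can vary independently of `A`. -/
def schurMatrix (A : Matrix (Fin (n + 1)) (Fin (n + 1)) S) (t : K) : Matrix (Fin n) (Fin n) S :=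
  t • -vecMulVec (fun i => A i.succ 0) (fun j => A 0 j.succ) + A.submatrix Fin.succ Fin.succ

/-- `schurMatrix A X` for an indeterminate `X`. -/
def schurPencil (A : Matrix (Fin (n + 1)) (Fin (n + 1)) S) : Matrix (Fin n) (Fin n) S[X] :=
  pencil (A.submatrix Fin.succ Fin.succ) (-vecMulVec (fun i => A i.succ 0) (fun j => A 0 j.succ))

variable (K) in
/-- The polynomial in `t` obtained by substituting the entries `x_{i+1,j+1} - t x_{i+1,0} x_{0,j+1}`
for the variables of `F`. -/
def schurExpansion (F : FreeAlgebra K (Fin n × Fin n)) :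
    (FreeAlgebra K (Fin (n + 1) × Fin (n + 1)))[X] :=
  evalEntries K (schurPencil (of fun i j => ι K (i, j))) F

theorem evalEntries_schurMatrix (A : Matrix (Fin (n + 1)) (Fin (n + 1)) S) (t : K)
    (F : FreeAlgebra K (Fin n × Fin n)) :
    evalEntries K (schurMatrix A t) F =
      ∑ k ∈ Finset.range ((schurExpansion K F).natDegree + 2),
        t ^ k • evalEntries K A ((schurExpansion K F).coeff k) := by
  have hmap : (schurExpansion K F).map (evalEntries K A) = evalEntries K (schurPencil A) F := by
    have h := map_evalEntries (mapAlgHom (evalEntries K A))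
      (schurPencil (of fun i j => ι K (i, j))) F
    rw [coe_mapAlgHom] at h
    rw [schurExpansion]
    refine h.trans (congrArg (fun M => evalEntries K M F) ?_)
    ext1 i j
    simp [schurPencil, pencil, vecMulVec_apply]
  rw [schurMatrix, ← eval_evalEntries_pencil, ← schurPencil, ← hmap, eval_map,
    eval₂_eq_sum_range' _ (Nat.lt_add_of_pos_right two_pos)]
  refine Finset.sum_congr rfl fun k _ => ?_
  rw [← map_pow, ← Algebra.commutes, ← Algebra.smul_def]
  rfl

theorem coeff_schurPencil_mem (i j : Fin n) (k : ℕ) :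
    (schurPencil (of fun i j => ι K (i, j)) i j).coeff k ∈
      contentSubmodule K (Multiset.replicate k 0 + {i.succ})
        (Multiset.replicate k 0 + {j.succ}) := by
  match k with
  | 0 => simpa [schurPencil, pencil] using ι_mem_contentSubmodule i.succ j.succ
  | 1 =>
    have h := mul_mem_contentSubmodule (ι_mem_contentSubmodule (K := K) i.succ 0)
      (ι_mem_contentSubmodule (K := K) 0 j.succ)
    rw [add_comm ({i.succ} : Multiset _)] at h
    simpa [schurPencil, pencil, vecMulVec_apply, coeff_C] using neg_mem h
  | k + 2 => simp [schurPencil, pencil]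

theorem coeff_schurExpansion_list_prod_mem (L : List (Fin n × Fin n)) (k : ℕ) :
    (schurExpansion K (L.map (ι K)).prod).coeff k ∈
      contentSubmodule K (Multiset.replicate k 0 + (L.map Prod.fst : Multiset (Fin n)).map Fin.succ)
        (Multiset.replicate k 0 + (L.map Prod.snd : Multiset (Fin n)).map Fin.succ) := by
  induction L generalizing k with
  | nil =>
    obtain rfl | hk := eq_or_ne k 0
    · simpa [schurExpansion] using list_prod_mem_contentSubmodule (K := K) []
    · simp [schurExpansion, coeff_one, hk]
  | cons p L ih =>
    have hcons : schurExpansion K ((p :: L).map (ι K)).prod =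
        schurPencil (of fun i j => ι K (i, j)) p.1 p.2 * schurExpansion K (L.map (ι K)).prod := by
      simp [schurExpansion]
    rw [hcons, coeff_mul]
    refine Submodule.sum_mem _ fun d hd => ?_
    convert mul_mem_contentSubmodule (coeff_schurPencil_mem p.1 p.2 d.1) (ih d.2) using 2 <;>
    · rw [← Finset.HasAntidiagonal.mem_antidiagonal.1 hd, Multiset.replicate_add, List.map_cons,
        ← Multiset.cons_coe, Multiset.map_cons, ← Multiset.singleton_add]
      abel

theorem coeff_schurExpansion_mem {r c : Multiset (Fin n)} {F : FreeAlgebra K (Fin n × Fin n)}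
    (hF : F ∈ contentSubmodule K r c) (k : ℕ) :
    (schurExpansion K F).coeff k ∈
      contentSubmodule K (Multiset.replicate k 0 + r.map Fin.succ)
        (Multiset.replicate k 0 + c.map Fin.succ) := by
  induction hF using Submodule.span_induction with
  | mem _ hx =>
    obtain ⟨L, ⟨rfl, rfl⟩, rfl⟩ := hx
    exact coeff_schurExpansion_list_prod_mem L k
  | zero => simp [schurExpansion]
  | add F G _ _ hF hG => simpa [schurExpansion] using add_mem hF hG
  | smul a F _ hF => simpa [schurExpansion] using Submodule.smul_mem _ a hF

theorem ι_mul_coeff_zero_add_coeff_one_schurExpansion_mem {F : FreeAlgebra K (Fin n × Fin n)}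
    (hF : F ∈ contentSubmodule K Finset.univ.val Finset.univ.val) :
    ι K (0, 0) * (schurExpansion K F).coeff 0 + (schurExpansion K F).coeff 1 ∈
      contentSubmodule K Finset.univ.val Finset.univ.val := by
  have huniv : (Finset.univ : Finset (Fin (n + 1))).val = {0} + Finset.univ.val.map Fin.succ := by
    rw [Fin.univ_succ]
    rfl
  rw [huniv]
  refine add_mem (mul_mem_contentSubmodule (ι_mem_contentSubmodule 0 0) ?_) ?_
  · simpa using coeff_schurExpansion_mem hF 0
  · simpa using coeff_schurExpansion_mem hF 1

end Schur

section Corner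

variable {S : Type*} {n : ℕ}

/-- The matrix `A` with its upper left entry replaced by `x`. -/
def withCorner (A : Matrix (Fin (n + 1)) (Fin (n + 1)) S) (x : S) :
    Matrix (Fin (n + 1)) (Fin (n + 1)) S :=
  A.updateRow 0 (Function.update (A 0) 0 x)

theorem withCorner_self (A : Matrix (Fin (n + 1)) (Fin (n + 1)) S) :
    withCorner A (A 0 0) = A := by
  simp [withCorner]

@[simp]
theorem withCorner_zero_zero (A : Matrix (Fin (n + 1)) (Fin (n + 1)) S) (x : S) :
    withCorner A x 0 0 = x := by
  simp [withCorner]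

@[simp]
theorem withCorner_zero_succ (A : Matrix (Fin (n + 1)) (Fin (n + 1)) S) (x : S) (j : Fin n) :
    withCorner A x 0 j.succ = A 0 j.succ := by
  simp [withCorner]

@[simp]
theorem withCorner_succ (A : Matrix (Fin (n + 1)) (Fin (n + 1)) S) (x : S) (i : Fin n) :
    withCorner A x i.succ = A i.succ := by
  simp [withCorner]

theorem continuous_withCorner [TopologicalSpace S] (A : Matrix (Fin (n + 1)) (Fin (n + 1)) S) :
    Continuous (withCorner A) :=
  continuous_const.update 0 (continuous_const.update 0 continuous_id)

end Corner

section Biquaternion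

theorem cq_mul (a : ℂ) (x : HC) : cq a * x = a • x :=
  (Algebra.smul_def a x).symm

theorem inverse_cq {a : ℂ} (ha : a ≠ 0) : Ring.inverse (cq a) = cq a⁻¹ :=
  Ring.inverse_unit (Units.map (algebraMap ℂ HC).toMonoidHom (Units.mk0 a ha))

theorem qdia_eq_star (x : HC) : qdia x = star x := by
  ext <;> simp [qdia]

theorem qdia_add (x y : HC) : qdia (x + y) = qdia x + qdia y := by
  simp only [qdia_eq_star]
  exact star_add x y

theorem qdia_neg (x : HC) : qdia (-x) = -qdia x := by
  simp only [qdia_eq_star]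
  exact star_neg x

theorem qdia_mul (x y : HC) : qdia (x * y) = qdia y * qdia x := by
  simp only [qdia_eq_star]
  exact star_mul x y

theorem qdia_smul (a : ℂ) (x : HC) : qdia (a • x) = a • qdia x := by
  simp only [qdia_eq_star]
  exact Quaternion.star_smul a x

theorem qdia_cq (a : ℂ) : qdia (cq a) = cq a := by
  ext <;> simp [qdia, cq]

theorem eq_cq_re_of_qdia_eq {x : HC} (hx : qdia x = x) : x = cq x.re := by
  rw [qdia_eq_star] at hx
  exact Quaternion.star_eq_self.1 hx

/-- The coordinates of a biquaternion, which induce its topology. -/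
def components : HC →ₗ[ℂ] ℂ × ℂ × ℂ × ℂ where
  toFun x := (x.re, x.imI, x.imJ, x.imK)
  map_add' _ _ := rfl
  map_smul' _ _ := rfl

theorem components_apply (x : HC) : components x = (x.re, x.imI, x.imJ, x.imK) :=
  rfl

theorem components_injective : Function.Injective components := fun x y h => by
  simp only [components_apply, Prod.mk.injEq] at h
  exact QuaternionAlgebra.ext h.1 h.2.1 h.2.2.1 h.2.2.2

theorem continuous_components : Continuous components :=
  continuous_induced_dom

instance : T2Space HC :=
  .of_injective_continuous components_injective continuous_components

instance : ContinuousAdd HC :=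
  continuousAdd_induced components

instance : ContinuousSMul ℂ HC :=
  continuousSMul_induced components

theorem continuous_cq : Continuous cq := by
  have h : Continuous fun z : ℂ => (z, (0 : ℂ), (0 : ℂ), (0 : ℂ)) := by fun_prop
  exact continuous_induced_rng.2 h

theorem continuous_qdia : Continuous qdia := by
  have h : Continuous fun x : ℂ × ℂ × ℂ × ℂ => (x.1, -x.2.1, -x.2.2.1, -x.2.2.2) := by fun_prop
  exact continuous_induced_rng.2 (h.comp continuous_components)

end Biquaternion

namespace IsHerm

variable {n : ℕ}

theorem add {A B : Matrix (Fin n) (Fin n) HC} (hA : IsHerm A) (hB : IsHerm B) :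
    IsHerm (A + B) := fun i j => by
  rw [Matrix.add_apply, Matrix.add_apply, qdia_add, hA i j, hB i j]

theorem smul {A : Matrix (Fin n) (Fin n) HC} (hA : IsHerm A) (a : ℂ) : IsHerm (a • A) :=
  fun i j => by rw [Matrix.smul_apply, Matrix.smul_apply, qdia_smul, hA i j]

variable {A : Matrix (Fin (n + 1)) (Fin (n + 1)) HC}

protected theorem schurMatrix (hA : IsHerm A) (t : ℂ) : IsHerm (schurMatrix A t) := fun i j => by
  simp [schurMatrix, vecMulVec_apply, qdia_add, qdia_smul, qdia_neg, qdia_mul, hA _ _]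

protected theorem withCorner (hA : IsHerm A) (a : ℂ) : IsHerm (withCorner A (cq a)) := fun i j => by
  cases i using Fin.cases <;> cases j using Fin.cases <;> simp [qdia_cq, hA _ _]

theorem withCorner_re (hA : IsHerm A) : withCorner A (cq (A 0 0).re) = A := by
  rw [← eq_cq_re_of_qdia_eq (hA 0 0), withCorner_self]

end IsHerm

namespace IsDtSeq

variable {D : ∀ n : ℕ, Matrix (Fin (n + 1)) (Fin (n + 1)) HC → HC} {n : ℕ}

protected theorem continuous_withCorner (hD : IsDtSeq D) {A : Matrix (Fin (n + 1)) (Fin (n + 1)) HC}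
    (hA : IsHerm A) : Continuous fun a => D n (withCorner A (cq a)) :=
  (hD.1 n).comp_continuous ((continuous_withCorner A).comp continuous_cq) hA.withCorner

theorem apply_withCorner (hD : IsDtSeq D) {A : Matrix (Fin (n + 2)) (Fin (n + 2)) HC}
    (hA : IsHerm A) {a : ℂ} (ha : a ≠ 0) :
    D (n + 1) (withCorner A (cq a)) = a • D n (schurMatrix A a⁻¹) := by
  have hcorner : withCorner A (cq a) 0 0 ≠ 0 := by
    rw [withCorner_zero_zero]
    exact fun h => ha (congrArg QuaternionAlgebra.re h)
  rw [hD.2.2 n _ (hA.withCorner a) hcorner, withCorner_zero_zero, cq_mul, inverse_cq ha]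
  congr 2
  ext1 i j
  rw [of_apply, mul_assoc, cq_mul]
  simp [schurMatrix, vecMulVec_apply, sub_eq_neg_add]

theorem qdia_apply (hD : IsDtSeq D) {A : Matrix (Fin (n + 1)) (Fin (n + 1)) HC} (hA : IsHerm A) :
    qdia (D n A) = D n A := by
  induction n with
  | zero => rw [hD.2.1 A hA, hA 0 0]
  | succ n ih =>
    have hcont := hD.continuous_withCorner hA
    have hqdia : (fun a => qdia (D (n + 1) (withCorner A (cq a)))) =
        fun a => D (n + 1) (withCorner A (cq a)) :=
      eq_of_forall_ne_zero_eq (continuous_qdia.comp hcont) hcont fun a ha => by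
        rw [hD.apply_withCorner hA ha, qdia_smul, ih (hA.schurMatrix a⁻¹)]
    simpa [hA.withCorner_re] using congrFun hqdia (A 0 0).re

theorem eq_cq_re (hD : IsDtSeq D) {A : Matrix (Fin (n + 1)) (Fin (n + 1)) HC} (hA : IsHerm A) :
    D n A = cq (D n A).re :=
  eq_cq_re_of_qdia_eq (hD.qdia_apply hA)

theorem exists_eq_evalEntries (hD : IsDtSeq D) (n : ℕ) :
    ∃ F : FreeAlgebra ℂ (Fin (n + 1) × Fin (n + 1)),
      F ∈ contentSubmodule ℂ Finset.univ.val Finset.univ.val ∧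
      ∀ A : Matrix (Fin (n + 1)) (Fin (n + 1)) HC, IsHerm A → D n A = evalEntries ℂ A F := by
  induction n with
  | zero =>
    refine ⟨FreeAlgebra.ι ℂ (0, 0), ι_mem_contentSubmodule 0 0, fun A hA => ?_⟩
    rw [hD.2.1 A hA, evalEntries_ι]
  | succ n ih =>
    obtain ⟨F, hF, hDF⟩ := ih
    refine ⟨_, ι_mul_coeff_zero_add_coeff_one_schurExpansion_mem hF, fun A hA => ?_⟩
    have haffine := eq_affine_of_continuous_laurent (hD.continuous_withCorner hA)
      (c := fun k => evalEntries ℂ A ((schurExpansion ℂ F).coeff k)) (fun a ha => by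
        rw [hD.apply_withCorner hA ha, hDF _ (hA.schurMatrix a⁻¹), evalEntries_schurMatrix])
      (A 0 0).re
    rw [hA.withCorner_re] at haffine
    rw [haffine, map_add, map_mul, evalEntries_ι, ← cq_mul, ← eq_cq_re_of_qdia_eq (hA 0 0)]

end IsDtSeq

/-- For every `n ≥ 1` (here `D n = dt_{n+1}`):
(a) `dt_n(α·x) = αⁿ·dt_n(x)`;
(b) `dt_n` is given by a fixed complex-linear combination of ordered products
`x_{σ(1)π(1)} ⋯ x_{σ(n)π(n)}` over pairs of permutations;
(c) `λ ↦ dt_n(λ·y + x)` is a complex polynomial of degree at most `n` whose coefficient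
at `λⁿ` is `dt_n(y)` and whose constant term is `dt_n(x)`. -/
theorem statement1 (D : ∀ n : ℕ, Matrix (Fin (n + 1)) (Fin (n + 1)) HC → HC)
    (hD : IsDtSeq D) (n : ℕ) :
    (∀ (A : Matrix (Fin (n + 1)) (Fin (n + 1)) HC), IsHerm A → ∀ α : ℂ,
      D n (α • A) = α ^ (n + 1) • D n A) ∧
    (∃ c : Equiv.Perm (Fin (n + 1)) → Equiv.Perm (Fin (n + 1)) → ℂ,
      ∀ (A : Matrix (Fin (n + 1)) (Fin (n + 1)) HC), IsHerm A →
        D n A = ∑ σ : Equiv.Perm (Fin (n + 1)), ∑ π : Equiv.Perm (Fin (n + 1)),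
          c σ π • (List.ofFn fun k : Fin (n + 1) => A (σ k) (π k)).prod) ∧
    (∀ (A B : Matrix (Fin (n + 1)) (Fin (n + 1)) HC), IsHerm A → IsHerm B →
      ∃ p : Polynomial ℂ, p.natDegree ≤ n + 1 ∧
        cq (p.coeff (n + 1)) = D n B ∧ cq (p.coeff 0) = D n A ∧
        ∀ z : ℂ, cq (Polynomial.eval z p) = D n (z • B + A)) := by
  obtain ⟨F, hF, hDF⟩ := hD.exists_eq_evalEntries n
  have hcard : (Finset.univ : Finset (Fin (n + 1))).val.card = n + 1 := Finset.card_fin _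
  refine ⟨fun A hA α => ?_, ?_, fun A B hA hB => ?_⟩
  · rw [hDF _ (hA.smul α), hDF A hA, evalEntries_smul hF, hcard]
  · obtain ⟨c, hc⟩ := exists_evalEntries_eq_sum_perm (S := HC) hF
    exact ⟨c, fun A hA => (hDF A hA).trans (hc A)⟩
  · obtain ⟨p, hdeg, hcoeff, heval⟩ := exists_polynomial_coeff_eq_apply_coeff
      (QuaternionAlgebra.reₗ (-1) 0 (-1)) (evalEntries ℂ (pencil A B) F)
    have hp (z : ℂ) : cq (p.eval z) = D n (z • B + A) := by
      have hBA := (hB.smul z).add hA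
      rw [heval, eval_evalEntries_pencil, ← hDF _ hBA]
      exact (hD.eq_cq_re hBA).symm
    refine ⟨p, ?_, ?_, ?_, hp⟩
    · exact hdeg.trans ((natDegree_evalEntries_pencil_le hF A B).trans_eq hcard)
    · have hlead := coeff_card_evalEntries_pencil hF A B
      rw [hcard] at hlead
      rw [hcoeff, hlead, ← hDF B hB]
      exact (hD.eq_cq_re hB).symm
    · rw [Polynomial.coeff_zero_eq_eval_zero, hp, zero_smul ℂ B, zero_add]
end
end

section
/- For every x ∈ H₂(ℍ_ℂ), dt₂(x) = x₁₁x₂₂ − x₂₁x₁₂. For every x ∈ H₃(ℍ_ℂ) with x₁₁ ≠ 0, dt₃(x) = x₁₁x₂₂x₃₃ + x₃₂x₂₁x₁₃ + x₃₁x₁₂x₂₃ − x₁₁x₃₂x₂₃ − x₂₂x₃₁x₁₃ − x₂₁x₁₂x₃₃, where all products are taken in ℍ_ℂ in the indicated order. -/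
/-!
In `ℍ_ℂ` every `⋄`-invariant element is a scalar, hence central, and is invertible when nonzero. For
`x₁₁ ≠ 0` the recursion therefore evaluates `dt₂` and `dt₃` through the Schur complement of `x₁₁`,
which is again `⋄`-hermitian. In the expansion of `dt₃` the two terms of degree four,
`x₁₁⁻¹ x₂₁ x₁₂ x₃₁ x₁₃` and `x₁₁⁻¹ x₃₁ x₁₂ x₂₁ x₁₃`, cancel because `x₂₁ x₁₂ = x₁₂ x₂₁` is central.
Adding a small scalar matrix makes the corner entry nonzero, so matrices with `x₁₁ ≠ 0` are dense in
`H_n(ℍ_ℂ)` and both formulas extend by continuity. The extension of the formula for `dt₂` is already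
needed for `dt₃`, since the corner of the Schur complement may vanish.
-/

noncomputable section

open Matrix

section Ring

variable {R : Type*} [Ring R] {n : ℕ}

/-- The Schur complement of the corner entry `A 0 0`, with the inverse of that entry written on the
left as in the recursion for `dt`; meaningful when `A 0 0` is a central unit. -/
def cornerSchur (A : Matrix (Fin (n + 1)) (Fin (n + 1)) R) : Matrix (Fin n) (Fin n) R :=
  Matrix.of fun i j => A i.succ j.succ - Ring.inverse (A 0 0) * A i.succ 0 * A 0 j.succ

lemma cornerSchur_apply (A : Matrix (Fin (n + 1)) (Fin (n + 1)) R) (i j : Fin n) :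
    cornerSchur A i j = A i.succ j.succ - Ring.inverse (A 0 0) * A i.succ 0 * A 0 j.succ :=
  rfl

lemma corner_mul_cornerSchur_apply {A : Matrix (Fin (n + 1)) (Fin (n + 1)) R}
    (h0 : IsUnit (A 0 0)) (i j : Fin n) :
    A 0 0 * cornerSchur A i j = A 0 0 * A i.succ j.succ - A i.succ 0 * A 0 j.succ := by
  rw [cornerSchur_apply, mul_sub, mul_assoc (Ring.inverse _), Ring.mul_inverse_cancel_left _ _ h0]

variable [StarRing R]

lemma commute_star_self_of_selfAdjoint_subset_center
    (hR : (selfAdjoint R : Set R) ⊆ Set.center R) (x : R) : Commute (star x) x := by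
  have h : Commute (x + star x) x := (hR (IsSelfAdjoint.add_star_self x)).comm x
  simpa only [add_sub_cancel_left] using h.sub_left (Commute.refl x)

lemma isHermitian_cornerSchur (hR : (selfAdjoint R : Set R) ⊆ Set.center R)
    {A : Matrix (Fin (n + 1)) (Fin (n + 1)) R} (hA : A.IsHermitian) :
    (cornerSchur A).IsHermitian := by
  have hinv : IsSelfAdjoint (Ring.inverse (A 0 0)) := IsSelfAdjoint.ringInverse (hA.apply 0 0)
  refine IsHermitian.ext fun i j => ?_
  simp only [cornerSchur_apply, star_sub, star_mul, hA.apply, hinv.star_eq]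
  rw [((hR hinv).comm (A i.succ 0)).eq, mul_assoc, ((hR hinv).comm (A 0 j.succ)).eq]

/-- The quartic terms cancel because `A 1 0 * A 0 1 = A 0 1 * A 1 0` is central. -/
lemma mul_cornerSchur_sub_mul_cornerSchur (hR : (selfAdjoint R : Set R) ⊆ Set.center R)
    {A : Matrix (Fin 3) (Fin 3) R} (hA : A.IsHermitian) :
    A 1 0 * A 0 1 * cornerSchur A 1 1 - A 2 0 * A 0 1 * cornerSchur A 0 1 =
      A 1 0 * A 0 1 * A 2 2 - A 2 0 * A 0 1 * A 1 2 := by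
  have hinv (x : R) : x * Ring.inverse (A 0 0) = Ring.inverse (A 0 0) * x :=
    ((hR (IsSelfAdjoint.ringInverse (hA.apply 0 0))).comm x).eq.symm
  have hswap : A 1 0 * A 0 1 * A 2 0 = A 2 0 * A 0 1 * A 1 0 := by
    rw [← hA.apply 1 0, ((hR (IsSelfAdjoint.star_mul_self (A 0 1))).comm (A 2 0)).eq,
      commute_star_self_of_selfAdjoint_subset_center hR (A 0 1), mul_assoc]
  have hquartic : A 1 0 * A 0 1 * (Ring.inverse (A 0 0) * A 2 0 * A 0 2) =
      A 2 0 * A 0 1 * (Ring.inverse (A 0 0) * A 1 0 * A 0 2) := by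
    simp only [← mul_assoc, hinv]
    simp only [mul_assoc (Ring.inverse (A 0 0)), hswap]
  change A 1 0 * A 0 1 * (A 2 2 - Ring.inverse (A 0 0) * A 2 0 * A 0 2) -
    A 2 0 * A 0 1 * (A 1 2 - Ring.inverse (A 0 0) * A 1 0 * A 0 2) = _
  rw [mul_sub, mul_sub, hquartic, sub_sub_sub_cancel_right]

lemma corner_mul_cornerSchur_det_eq (hR : (selfAdjoint R : Set R) ⊆ Set.center R)
    {A : Matrix (Fin 3) (Fin 3) R} (hA : A.IsHermitian) (h0 : IsUnit (A 0 0)) :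
    A 0 0 * (cornerSchur A 0 0 * cornerSchur A 1 1 - cornerSchur A 1 0 * cornerSchur A 0 1) =
      A 0 0 * A 1 1 * A 2 2 + A 2 1 * A 1 0 * A 0 2 + A 2 0 * A 0 1 * A 1 2
        - A 0 0 * A 2 1 * A 1 2 - A 1 1 * A 2 0 * A 0 2 - A 1 0 * A 0 1 * A 2 2 := by
  have hcorner (x : R) : A 0 0 * x = x * A 0 0 := ((hR (hA.apply 0 0)).comm x).eq
  have hmul (i j : Fin 2) :
      A 0 0 * cornerSchur A i j = A 0 0 * A i.succ j.succ - A i.succ 0 * A 0 j.succ :=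
    corner_mul_cornerSchur_apply h0 i j
  calc
    _ = A 0 0 * cornerSchur A 0 0 * cornerSchur A 1 1 -
          A 0 0 * cornerSchur A 1 0 * cornerSchur A 0 1 := by
      simp only [mul_sub, mul_assoc]
    _ = (A 0 0 * A 1 1 - A 1 0 * A 0 1) * cornerSchur A 1 1 -
          (A 0 0 * A 2 1 - A 2 0 * A 0 1) * cornerSchur A 0 1 := by
      rw [hmul, hmul]; rfl
    _ = A 1 1 * (A 0 0 * cornerSchur A 1 1) - A 2 1 * (A 0 0 * cornerSchur A 0 1) -
          (A 1 0 * A 0 1 * cornerSchur A 1 1 - A 2 0 * A 0 1 * cornerSchur A 0 1) := by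
      rw [hcorner (A 1 1), hcorner (A 2 1)]; noncomm_ring
    _ = A 1 1 * (A 0 0 * A 2 2 - A 2 0 * A 0 2) - A 2 1 * (A 0 0 * A 1 2 - A 1 0 * A 0 2) -
          (A 1 0 * A 0 1 * A 2 2 - A 2 0 * A 0 1 * A 1 2) := by
      rw [hmul, hmul, mul_cornerSchur_sub_mul_cornerSchur hR hA]; rfl
    _ = _ := by
      rw [hcorner (A 1 1), hcorner (A 2 1)]; noncomm_ring

end Ring

section Quaternion

open Quaternion

lemma selfAdjoint_quaternion_subset_center {R : Type*} [CommRing R] [NoZeroDivisors R]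
    [CharZero R] : (selfAdjoint ℍ[R] : Set ℍ[R]) ⊆ Set.center ℍ[R] := by
  intro a ha
  rw [Quaternion.star_eq_self.mp ha]
  exact Semigroup.mem_center_iff.mpr fun x => (Quaternion.coe_commutes _ x).symm

lemma isUnit_quaternion_of_isSelfAdjoint {K : Type*} [Field K] [CharZero K] {a : ℍ[K]}
    (ha : IsSelfAdjoint a) (h0 : a ≠ 0) : IsUnit a := by
  have hcoe : a = algebraMap K ℍ[K] a.re := Quaternion.star_eq_self.mp ha
  rw [hcoe] at h0 ⊢
  exact (IsUnit.mk0 _ fun h => h0 (by rw [h, map_zero])).map (algebraMap K ℍ[K])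

end Quaternion

lemma isHerm_iff_isHermitian {n : ℕ} {A : Matrix (Fin n) (Fin n) HC} :
    IsHerm A ↔ A.IsHermitian := by
  have hstar (x : HC) : qdia x = star x := by ext <;> simp [qdia]
  simp only [IsHerm, IsHermitian.ext_iff, hstar]

namespace HC

lemma continuous_iff {X : Type*} [TopologicalSpace X] {f : X → HC} :
    Continuous f ↔ Continuous (fun x => (f x).re) ∧ Continuous (fun x => (f x).imI) ∧
      Continuous (fun x => (f x).imJ) ∧ Continuous fun x => (f x).imK := by
  simp only [continuous_induced_rng, Function.comp_def, continuous_prodMk]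

@[fun_prop]
lemma continuous_re : Continuous fun q : HC => q.re :=
  (continuous_iff.mp continuous_id).1

@[fun_prop]
lemma continuous_imI : Continuous fun q : HC => q.imI :=
  (continuous_iff.mp continuous_id).2.1

@[fun_prop]
lemma continuous_imJ : Continuous fun q : HC => q.imJ :=
  (continuous_iff.mp continuous_id).2.2.1

@[fun_prop]
lemma continuous_imK : Continuous fun q : HC => q.imK :=
  (continuous_iff.mp continuous_id).2.2.2

lemma continuous_coe : Continuous fun z : ℂ => (z : HC) :=
  continuous_iff.mpr ⟨continuous_id, continuous_const, continuous_const, continuous_const⟩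

instance : IsTopologicalRing HC where
  continuous_add := by
    simp only [continuous_iff, Quaternion.re_add, Quaternion.imI_add, Quaternion.imJ_add,
      Quaternion.imK_add]
    refine ⟨?_, ?_, ?_, ?_⟩ <;> fun_prop
  continuous_mul := by
    simp only [continuous_iff, Quaternion.re_mul, Quaternion.imI_mul, Quaternion.imJ_mul,
      Quaternion.imK_mul]
    refine ⟨?_, ?_, ?_, ?_⟩ <;> fun_prop
  continuous_neg := by
    simp only [continuous_iff, Quaternion.re_neg, Quaternion.imI_neg, Quaternion.imJ_neg,
      Quaternion.imK_neg]
    refine ⟨?_, ?_, ?_, ?_⟩ <;> fun_prop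

instance : T2Space HC :=
  .of_injective_continuous (f := fun q : HC => (q.re, q.imI, q.imJ, q.imK))
    (fun p q h => by simpa [Quaternion.ext_iff] using h) continuous_induced_dom

end HC

lemma isHerm_subset_closure_diag_ne_zero {n : ℕ} (i : Fin n) :
    {A : Matrix (Fin n) (Fin n) HC | IsHerm A} ⊆ closure {A | IsHerm A ∧ A i i ≠ 0} := by
  intro A hA
  let shift (t : ℂ) : Matrix (Fin n) (Fin n) HC := A + diagonal fun _ => (t : HC)
  have hcont : Continuous shift :=
    continuous_const.add (continuous_pi fun _ => HC.continuous_coe).matrix_diagonal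
  have hscalar (t : ℂ) : (diagonal fun _ : Fin n => (t : HC)).IsHermitian :=
    isHermitian_diagonal_of_self_adjoint _ (funext fun _ => Quaternion.star_coe t)
  have hherm (t : ℂ) : IsHerm (shift t) :=
    isHerm_iff_isHermitian.mpr ((isHerm_iff_isHermitian.mp hA).add (hscalar t))
  have hdiag (t : ℂ) : shift t i i = A i i + (t : HC) := by simp [shift]
  have hmaps : Set.MapsTo shift {-(A i i).re}ᶜ {A | IsHerm A ∧ A i i ≠ 0} := by
    refine fun t ht => ⟨hherm t, fun h => ht ?_⟩
    have hre : (A i i).re + t = 0 := congrArg QuaternionAlgebra.re ((hdiag t).symm.trans h)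
    exact eq_neg_of_add_eq_zero_right hre
  have hzero : shift 0 = A := by simp [shift]
  exact hzero ▸ map_mem_closure hcont (dense_compl_singleton _ 0) hmaps

namespace IsHerm

variable {n : ℕ}

lemma eq_of_forall_diag_ne_zero {X : Type*} [TopologicalSpace X] [T2Space X]
    {f g : Matrix (Fin n) (Fin n) HC → X} {A : Matrix (Fin n) (Fin n) HC} (hA : IsHerm A)
    (i : Fin n) (hf : ContinuousOn f {A | IsHerm A}) (hg : ContinuousOn g {A | IsHerm A})
    (hfg : ∀ B, IsHerm B → B i i ≠ 0 → f B = g B) : f A = g A :=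
  Set.EqOn.of_subset_closure (fun B hB => hfg B hB.1 hB.2) hf hg (fun _ hB => hB.1)
    (isHerm_subset_closure_diag_ne_zero i) hA

lemma isUnit_diag {A : Matrix (Fin n) (Fin n) HC} (hA : IsHerm A) {i : Fin n} (h0 : A i i ≠ 0) :
    IsUnit (A i i) :=
  isUnit_quaternion_of_isSelfAdjoint ((isHerm_iff_isHermitian.mp hA).apply i i) h0

lemma cornerSchur {A : Matrix (Fin (n + 1)) (Fin (n + 1)) HC} (hA : IsHerm A) :
    IsHerm (cornerSchur A) :=
  isHerm_iff_isHermitian.mpr <|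
    isHermitian_cornerSchur selfAdjoint_quaternion_subset_center (isHerm_iff_isHermitian.mp hA)

end IsHerm

namespace IsDtSeq

variable {D : ∀ n : ℕ, Matrix (Fin (n + 1)) (Fin (n + 1)) HC → HC}

lemma apply_succ (hD : IsDtSeq D) {n : ℕ} {A : Matrix (Fin (n + 2)) (Fin (n + 2)) HC}
    (hA : IsHerm A) (h0 : A 0 0 ≠ 0) : D (n + 1) A = A 0 0 * D n (cornerSchur A) :=
  hD.2.2 n A hA h0

lemma apply_one (hD : IsDtSeq D) {A : Matrix (Fin 2) (Fin 2) HC} (hA : IsHerm A) :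
    D 1 A = A 0 0 * A 1 1 - A 1 0 * A 0 1 := by
  apply hA.eq_of_forall_diag_ne_zero 0 (hD.1 1) ?_ fun B hB h0 => ?_
  · fun_prop
  rw [hD.apply_succ hB h0, hD.2.1 _ hB.cornerSchur]
  exact corner_mul_cornerSchur_apply (hB.isUnit_diag h0) 0 0

end IsDtSeq

theorem statement4_general (D : ∀ n : ℕ, Matrix (Fin (n + 1)) (Fin (n + 1)) HC → HC)
    (hD : IsDtSeq D) :
    (∀ A : Matrix (Fin 2) (Fin 2) HC, IsHerm A →
      D 1 A = A 0 0 * A 1 1 - A 1 0 * A 0 1) ∧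
    (∀ A : Matrix (Fin 3) (Fin 3) HC, IsHerm A →
      D 2 A = A 0 0 * A 1 1 * A 2 2 + A 2 1 * A 1 0 * A 0 2 + A 2 0 * A 0 1 * A 1 2
        - A 0 0 * A 2 1 * A 1 2 - A 1 1 * A 2 0 * A 0 2 - A 1 0 * A 0 1 * A 2 2) := by
  refine ⟨fun A hA => hD.apply_one hA, fun A hA => ?_⟩
  apply hA.eq_of_forall_diag_ne_zero 0 (hD.1 2) ?_ fun B hB h0 => ?_
  · fun_prop
  rw [hD.apply_succ hB h0, hD.apply_one hB.cornerSchur]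
  exact corner_mul_cornerSchur_det_eq selfAdjoint_quaternion_subset_center
    (isHerm_iff_isHermitian.mp hB) (hB.isUnit_diag h0)

/-- For every `x ∈ H₂(ℍ_ℂ)`, `dt₂(x) = x₁₁x₂₂ − x₂₁x₁₂`; and for every
`x ∈ H₃(ℍ_ℂ)` with `x₁₁ ≠ 0`,
`dt₃(x) = x₁₁x₂₂x₃₃ + x₃₂x₂₁x₁₃ + x₃₁x₁₂x₂₃ − x₁₁x₃₂x₂₃ − x₂₂x₃₁x₁₃ − x₂₁x₁₂x₃₃`,
all products taken in `ℍ_ℂ` in the indicated order (here `D 1 = dt₂`, `D 2 = dt₃`). -/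
theorem statement4 (D : ∀ n : ℕ, Matrix (Fin (n + 1)) (Fin (n + 1)) HC → HC)
    (hD : IsDtSeq D) :
    (∀ A : Matrix (Fin 2) (Fin 2) HC, IsHerm A →
      D 1 A = A 0 0 * A 1 1 - A 1 0 * A 0 1) ∧
    (∀ A : Matrix (Fin 3) (Fin 3) HC, IsHerm A → A 0 0 ≠ 0 →
      D 2 A = A 0 0 * A 1 1 * A 2 2 + A 2 1 * A 1 0 * A 0 2 + A 2 0 * A 0 1 * A 1 2
        - A 0 0 * A 2 1 * A 1 2 - A 1 1 * A 2 0 * A 0 2 - A 1 0 * A 0 1 * A 2 2) :=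
  have ⟨dt_two, dt_three⟩ := statement4_general D hD
  ⟨dt_two, fun A hA _ => dt_three A hA⟩
end
end

section
/- Let u ∈ 𝕆_ℝ be a nonzero element. Then: (a) there is an asymmetric triple isomorphism T of 𝕆_ℝ with T(u) ∈ ℝ·1; (b) there is an automorphism T of 𝕆_ℝ with T(u) ∈ span_ℝ{e₀, e₁}; (c) there is an automorphism T of 𝕆_ℝ with T(e₁) = e₁ and T(u) ∈ span_ℝ{e₀, e₁, e₂}. -/
/-!
Write `𝕆_ℝ = ℍ ⊕ ℍ`. For unit quaternions `p` and `q`, the map `(x, y) ↦ (p x p⋄, p y q⋄)` is an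
automorphism, and so is the signed permutation `σ` of the basis that fixes `1` and `i` and exchanges
`j` with `ℓ = (0, 1)`. Unit quaternions act transitively on spheres of `ℍ` by left or right
multiplication, so taking `p = 1` turns `y` into a multiple of `j`; then `σ` moves the `j` and `k`
components of `x` into the second factor, where a second right multiplication collects them in a
multiple of `1`, which `σ` carries back to a multiple of `j`. All these maps fix `e₁`, and the image
of `u` lies in `span {1, i, j}`. Conjugation by a unit quaternion rotates it further into
`span {1, i}`. Finally, `(x, y) ↦ (p x, p y)` is an asymmetric triple isomorphism, and a suitable
`p` makes the result real.
-/

noncomputable section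

/-- The real quaternions `ℍ`. -/
abbrev HR : Type := Quaternion ℝ

/-- Quaternion conjugation `x ↦ x⋄` on `ℍ`. -/
def rqdia (x : HR) : HR := ⟨x.re, -x.imI, -x.imJ, -x.imK⟩

/-- The real octonions `𝕆_ℝ`, modelled as pairs of real quaternions. -/
abbrev OR : Type := HR × HR

/-- Cayley–Dickson multiplication on `𝕆_ℝ`. -/
def rmul (x y : OR) : OR :=
  (x.1 * y.1 - y.2 * rqdia x.2, rqdia x.1 * y.2 + y.1 * x.2)

/-- The octonion unit `1 = (1, 0)`. -/
def rone : OR := (1, 0)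

/-- The linear involution `x ↦ x⋄` on `𝕆_ℝ`. -/
def rdia (x : OR) : OR := (rqdia x.1, -x.2)

/-- The squared Euclidean norm of `ℝ⁸`: `‖(x₁,x₂)‖² = ‖x₁‖² + ‖x₂‖²`. -/
def rnormSq (x : OR) : ℝ := ‖x.1‖ ^ 2 + ‖x.2‖ ^ 2

/-- An asymmetric triple isomorphism of `𝕆_ℝ`: a real-linear bijection `T` with
`T((x⬝y⋄)⬝z) = (T(x)⬝T(y)⋄)⬝T(z)` for all `x, y, z`. -/
def IsATI (T : OR → OR) : Prop :=
  IsLinearMap ℝ T ∧ Function.Bijective T ∧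
    ∀ x y z : OR, T (rmul (rmul x (rdia y)) z) = rmul (rmul (T x) (rdia (T y))) (T z)

/-- An automorphism of `𝕆_ℝ`: a real-linear bijection `T` with `T(1) = 1`,
`T(x⋄) = T(x)⋄` and `T(x⬝y) = T(x)⬝T(y)`. -/
def IsAutOR (T : OR → OR) : Prop :=
  IsLinearMap ℝ T ∧ Function.Bijective T ∧ T rone = rone ∧
    (∀ x : OR, T (rdia x) = rdia (T x)) ∧
    ∀ x y : OR, T (rmul x y) = rmul (T x) (T y)

/-- The canonical basis vector `e₀ = 1 = (1,0)`. -/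
def e₀ : OR := rone

/-- The canonical basis vector `e₁ = (i, 0)`. -/
def e₁ : OR := ((⟨0, 1, 0, 0⟩ : HR), 0)

/-- The canonical basis vector `e₂ = (j, 0)`. -/
def e₂ : OR := ((⟨0, 0, 1, 0⟩ : HR), 0)

open scoped Quaternion

section UnitQuaternions

theorem star_unitary_mul_cancel_left {M : Type*} [Monoid M] [StarMul M] (p : unitary M) (x : M) :
    star (p : M) * (p * x) = x := by
  rw [← mul_assoc, Unitary.coe_star_mul_self, one_mul]

theorem mem_unitary_iff_normSq_eq_one {R : Type*} [CommRing R] {q : ℍ[R]} :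
    q ∈ unitary ℍ[R] ↔ Quaternion.normSq q = 1 := by
  rw [Unitary.mem_iff, Quaternion.star_mul_self, Quaternion.self_mul_star, and_self,
    ← Quaternion.coe_one, Quaternion.coe_inj]

/- For imaginary `x` and `y`, the intertwiner `x - star y` is `x + y`, and conjugation by it is the
half-turn about the bisector of `x` and `y`. -/
theorem sub_star_mul_eq_mul_sub_star {R : Type*} [CommRing R] {x y : ℍ[R]} (h_re : x.re = y.re)
    (h_normSq : Quaternion.normSq x = Quaternion.normSq y) :
    (x - star y) * x = y * (x - star y) := by
  have h_star : x - star y = y - star x := by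
    rw [Quaternion.star_eq_two_re_sub, Quaternion.star_eq_two_re_sub x, h_re]
    abel
  calc (x - star y) * x = y * x - Quaternion.normSq x := by
        rw [h_star, sub_mul, Quaternion.star_mul_self]
    _ = y * (x - star y) := by rw [mul_sub, Quaternion.self_mul_star, h_normSq]

variable {R : Type*} [Field R] [LinearOrder R] [IsStrictOrderedRing R] {x y : ℍ[R]}

theorem exists_unitary_mul_eq (h : Quaternion.normSq x = Quaternion.normSq y) :
    ∃ p : unitary ℍ[R], p * x = y := by
  by_cases hx : x = 0
  · have hy : y = 0 := by rwa [hx, map_zero, eq_comm, Quaternion.normSq_eq_zero] at h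
    exact ⟨1, by simp [hx, hy]⟩
  · have hyx : Quaternion.normSq (y * x⁻¹) = 1 := by
      rw [map_mul, Quaternion.normSq_inv, ← h,
        mul_inv_cancel₀ (Quaternion.normSq_ne_zero.mpr hx)]
    exact ⟨⟨y * x⁻¹, mem_unitary_iff_normSq_eq_one.mpr hyx⟩, inv_mul_cancel_right₀ hx y⟩

theorem exists_unitary_mul_star_eq (h : Quaternion.normSq x = Quaternion.normSq y) :
    ∃ q : unitary ℍ[R], x * star (q : ℍ[R]) = y := by
  have h_star : Quaternion.normSq (star x) = Quaternion.normSq (star y) := by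
    rwa [Quaternion.normSq_star, Quaternion.normSq_star]
  obtain ⟨q, hq⟩ := exists_unitary_mul_eq h_star
  exact ⟨q, by rw [← star_star x, ← star_mul, hq, star_star]⟩

theorem normSq_coe_norm (x : ℍ[ℝ]) : Quaternion.normSq (‖x‖ : ℍ[ℝ]) = Quaternion.normSq x := by
  rw [Quaternion.normSq_coe, Quaternion.normSq_eq_norm_mul_self, sq]

theorem exists_unitary_conj_eq_of_mul_eq_mul {x y w : ℍ[ℝ]} (hw : w ≠ 0) (h : w * x = y * w) :
    ∃ p : unitary ℍ[ℝ], p * x * star (p : ℍ[ℝ]) = y := by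
  have h_unit : ‖w‖⁻¹ • w ∈ unitary ℍ[ℝ] := by
    rw [mem_unitary_iff_normSq_eq_one, Quaternion.normSq_eq_norm_mul_self, norm_smul, norm_inv,
      norm_norm, inv_mul_cancel₀ (norm_ne_zero_iff.mpr hw), one_mul]
  refine ⟨⟨‖w‖⁻¹ • w, h_unit⟩, ?_⟩
  rw [smul_mul_assoc, h, ← mul_smul_comm, mul_assoc, Unitary.mul_star_self_of_mem h_unit, mul_one]

theorem exists_unitary_conj_eq_coeComplex (x : ℍ[ℝ]) :
    ∃ (p : unitary ℍ[ℝ]) (z : ℂ), p * x * star (p : ℍ[ℝ]) = z := by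
  by_cases hx : ∃ z : ℂ, x = z
  · obtain ⟨z, rfl⟩ := hx
    exact ⟨1, z, by simp⟩
  · let z : ℂ := ⟨x.re, ‖x.im‖⟩
    have h_normSq : Quaternion.normSq x = Quaternion.normSq (z : ℍ[ℝ]) := by
      have h_im : ‖x.im‖ ^ 2 = x.imI ^ 2 + x.imJ ^ 2 + x.imK ^ 2 := by
        rw [sq, ← Quaternion.normSq_eq_norm_mul_self, Quaternion.normSq_def']
        simp
      simp only [Quaternion.normSq_def', Quaternion.re_coeComplex, Quaternion.imI_coeComplex,
        Quaternion.imJ_coeComplex, Quaternion.imK_coeComplex, z, h_im]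
      ring
    have h_ne : x - star (z : ℍ[ℝ]) ≠ 0 := by
      refine fun h => hx ⟨star z, ?_⟩
      rw [sub_eq_zero.mp h]
      ext <;> simp
    obtain ⟨p, hp⟩ := exists_unitary_conj_eq_of_mul_eq_mul h_ne
      (sub_star_mul_eq_mul_sub_star rfl h_normSq)
    exact ⟨p, z, hp⟩

end UnitQuaternions

section Coordinates

/-- The quaternion `a + b i + c j + d k`. It is a definition rather than an anonymous constructor,
whose type unfolds to `QuaternionAlgebra` and thus escapes the component lemmas for `Quaternion`. -/
@[simps]
def quat (a b c d : ℝ) : HR := ⟨a, b, c, d⟩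

theorem e₁_eq : e₁ = (quat 0 1 0 0, 0) := rfl

theorem e₂_eq : e₂ = (quat 0 0 1 0, 0) := rfl

theorem rqdia_eq_star (x : HR) : rqdia x = star x := by
  ext <;> simp [rqdia]

end Coordinates

section Automorphisms

theorem IsAutOR.comp {S T : OR → OR} (hS : IsAutOR S) (hT : IsAutOR T) : IsAutOR (S ∘ T) := by
  obtain ⟨linS, bijS, oneS, diaS, mulS⟩ := hS
  obtain ⟨linT, bijT, oneT, diaT, mulT⟩ := hT
  refine ⟨((linS.mk' S).comp (linT.mk' T)).isLinear, bijS.comp bijT, ?_, fun x => ?_, fun x y => ?_⟩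
  · rw [Function.comp_apply, oneT, oneS]
  · simp only [Function.comp_apply, diaT, diaS]
  · simp only [Function.comp_apply, mulT, mulS]

theorem IsATI.comp {S T : OR → OR} (hS : IsATI S) (hT : IsATI T) : IsATI (S ∘ T) := by
  obtain ⟨linS, bijS, tripleS⟩ := hS
  obtain ⟨linT, bijT, tripleT⟩ := hT
  refine ⟨((linS.mk' S).comp (linT.mk' T)).isLinear, bijS.comp bijT, fun x y z => ?_⟩
  simp only [Function.comp_apply, tripleT, tripleS]

theorem IsAutOR.isATI {T : OR → OR} (hT : IsAutOR T) : IsATI T := by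
  obtain ⟨linT, bijT, -, diaT, mulT⟩ := hT
  exact ⟨linT, bijT, fun x y z => by simp only [mulT, diaT]⟩

theorem isATI_unitary_smul (p : unitary HR) : IsATI (p • ·) := by
  refine ⟨⟨smul_add p, fun c x => smul_comm p c x⟩, MulAction.bijective p, fun x y z => ?_⟩
  ext1 <;> simp [rmul, rdia, rqdia_eq_star, Submonoid.smul_def, mul_assoc, mul_add, add_mul,
    mul_sub, star_unitary_mul_cancel_left]

/-- The automorphism of `𝕆_ℝ = ℍ ⊕ ℍ` attached to a pair of unit quaternions. These are exactly the
automorphisms preserving the subalgebra `ℍ ⊕ 0`. -/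
def quatAut (p q : unitary HR) (x : OR) : OR :=
  (p * x.1 * star (p : HR), p * x.2 * star (q : HR))

theorem quatAut_one (x : OR) : quatAut 1 1 x = x := by
  simp [quatAut]

theorem quatAut_quatAut (p q p' q' : unitary HR) (x : OR) :
    quatAut p q (quatAut p' q' x) = quatAut (p * p') (q * q') x := by
  simp [quatAut, mul_assoc]

theorem bijective_quatAut (p q : unitary HR) : Function.Bijective (quatAut p q) :=
  Function.bijective_iff_has_inverse.mpr ⟨quatAut p⁻¹ q⁻¹,
    fun x => by rw [quatAut_quatAut, inv_mul_cancel, inv_mul_cancel, quatAut_one],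
    fun x => by rw [quatAut_quatAut, mul_inv_cancel, mul_inv_cancel, quatAut_one]⟩

theorem isAutOR_quatAut (p q : unitary HR) : IsAutOR (quatAut p q) := by
  refine ⟨⟨fun x y => ?_, fun c x => ?_⟩, bijective_quatAut p q, ?_, fun x => ?_, fun x y => ?_⟩
  · simp [quatAut, mul_add, add_mul]
  · simp [quatAut]
  · simp [quatAut, rone]
  · simp [quatAut, rdia, rqdia_eq_star, mul_assoc]
  · simp [quatAut, rmul, rqdia_eq_star, mul_assoc, mul_add, add_mul, mul_sub, sub_mul,
      star_unitary_mul_cancel_left]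

theorem quatAut_one_e₁ (q : unitary HR) : quatAut 1 q e₁ = e₁ := by
  simp [quatAut, e₁_eq]

/-- The signed permutation automorphism of the basis of `𝕆_ℝ` that fixes `1` and `i` and exchanges
`j` with `ℓ = (0, 1)`. As `i`, `j` and `ℓ` generate `𝕆_ℝ`, this determines the other signs. -/
def swapAut (x : OR) : OR :=
  (quat x.1.re x.1.imI x.2.re (-x.2.imI), quat x.1.imJ (-x.1.imK) (-x.2.imJ) (-x.2.imK))

theorem involutive_swapAut : Function.Involutive swapAut := by
  intro x
  ext <;> simp [swapAut]

theorem swapAut_rmul (x y : OR) : swapAut (rmul x y) = rmul (swapAut x) (swapAut y) := by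
  ext <;> simp only [swapAut, rmul, rqdia_eq_star, re_quat, imI_quat, imJ_quat, imK_quat,
    Quaternion.re_star, Quaternion.imI_star, Quaternion.imJ_star, Quaternion.imK_star,
    Quaternion.re_add, Quaternion.imI_add, Quaternion.imJ_add, Quaternion.imK_add,
    Quaternion.re_sub, Quaternion.imI_sub, Quaternion.imJ_sub, Quaternion.imK_sub,
    Quaternion.re_mul, Quaternion.imI_mul, Quaternion.imJ_mul, Quaternion.imK_mul] <;> ring

theorem isAutOR_swapAut : IsAutOR swapAut := by
  refine ⟨⟨fun x y => ?_, fun c x => ?_⟩, involutive_swapAut.bijective, ?_, fun x => ?_,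
    swapAut_rmul⟩
  · ext <;> simp [swapAut, add_comm]
  · ext <;> simp [swapAut]
  · ext <;> simp [swapAut, rone]
  · ext <;> simp [swapAut, rdia, rqdia_eq_star]

theorem swapAut_e₁ : swapAut e₁ = e₁ := by
  ext <;> simp [swapAut, e₁_eq]

end Automorphisms

section NormalForms

theorem exists_isAutOR_fixing_e₁_eq_quat (u : OR) : ∃ T : OR → OR, IsAutOR T ∧ T e₁ = e₁ ∧
    ∃ a b c : ℝ, T u = (quat a b c 0, 0) := by
  obtain ⟨x, y⟩ := u
  obtain ⟨q, hq⟩ : ∃ q : unitary HR, y * star (q : HR) = quat 0 0 ‖y‖ 0 :=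
    exists_unitary_mul_star_eq (by
      simp [Quaternion.normSq_eq_norm_mul_self y, Quaternion.normSq_def', sq])
  have h_first : swapAut (quatAut 1 q (x, y)) =
      (quat x.re x.imI 0 0, quat x.imJ (-x.imK) (-‖y‖) 0) := by
    simp [quatAut, hq, swapAut]
  set y' : HR := quat x.imJ (-x.imK) (-‖y‖) 0
  obtain ⟨q', hq'⟩ : ∃ q' : unitary HR, y' * star (q' : HR) = (‖y'‖ : ℝ) :=
    exists_unitary_mul_star_eq (normSq_coe_norm _).symm
  refine ⟨swapAut ∘ quatAut 1 q' ∘ swapAut ∘ quatAut 1 q, ?_, ?_, x.re, x.imI, ‖y'‖, ?_⟩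
  · exact isAutOR_swapAut.comp ((isAutOR_quatAut 1 q').comp
      (isAutOR_swapAut.comp (isAutOR_quatAut 1 q)))
  · simp only [Function.comp_apply, quatAut_one_e₁, swapAut_e₁]
  · simp only [Function.comp_apply, h_first]
    ext <;> simp [quatAut, hq', swapAut]

theorem exists_isAutOR_eq_coeComplex (u : OR) : ∃ T : OR → OR, IsAutOR T ∧
    ∃ z : ℂ, T u = ((z : HR), 0) := by
  obtain ⟨T, hT, -, a, b, c, hu⟩ := exists_isAutOR_fixing_e₁_eq_quat u
  obtain ⟨p, z, hz⟩ := exists_unitary_conj_eq_coeComplex (quat a b c 0)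
  exact ⟨quatAut p 1 ∘ T, (isAutOR_quatAut p 1).comp hT, z, by simp [hu, quatAut, hz]⟩

theorem exists_isATI_eq_smul_rone (u : OR) : ∃ T : OR → OR, IsATI T ∧
    ∃ r : ℝ, T u = r • rone := by
  obtain ⟨T, hT, z, hu⟩ := exists_isAutOR_eq_coeComplex u
  obtain ⟨p, hp⟩ : ∃ p : unitary HR, p * (z : HR) = (‖(z : HR)‖ : ℝ) :=
    exists_unitary_mul_eq (normSq_coe_norm _).symm
  refine ⟨(p • ·) ∘ T, (isATI_unitary_smul p).comp hT.isATI, ‖(z : HR)‖, ?_⟩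
  simp [hu, rone, Submonoid.smul_def, hp, ← Quaternion.algebraMap_def,
    Algebra.algebraMap_eq_smul_one]

theorem coeComplex_mem_span_e₀_e₁ (z : ℂ) :
    ((z : HR), 0) ∈ Submodule.span ℝ ({e₀, e₁} : Set OR) := by
  refine Submodule.mem_span_pair.mpr ⟨z.re, z.im, ?_⟩
  ext <;> simp [e₀, e₁_eq, rone]

theorem quat_mem_span_e₀_e₁_e₂ (a b c : ℝ) :
    (quat a b c 0, 0) ∈ Submodule.span ℝ ({e₀, e₁, e₂} : Set OR) := by
  refine Submodule.mem_span_triple.mpr ⟨a, b, c, ?_⟩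
  ext <;> simp [e₀, e₁_eq, e₂_eq, rone]

end NormalForms

/-- Let `u ∈ 𝕆_ℝ` be nonzero. Then:
(a) there is an asymmetric triple isomorphism `T` of `𝕆_ℝ` with `T(u) ∈ ℝ·1`;
(b) there is an automorphism `T` of `𝕆_ℝ` with `T(u) ∈ span_ℝ{e₀, e₁}`;
(c) there is an automorphism `T` of `𝕆_ℝ` with `T(e₁) = e₁` and
`T(u) ∈ span_ℝ{e₀, e₁, e₂}`. -/
theorem statement10 (u : OR) (hu : u ≠ 0) :
    (∃ T : OR → OR, IsATI T ∧ ∃ r : ℝ, T u = r • rone) ∧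
    (∃ T : OR → OR, IsAutOR T ∧ T u ∈ Submodule.span ℝ ({e₀, e₁} : Set OR)) ∧
    (∃ T : OR → OR, IsAutOR T ∧ T e₁ = e₁ ∧
      T u ∈ Submodule.span ℝ ({e₀, e₁, e₂} : Set OR)) := by
  obtain ⟨T, hT, z, hTu⟩ := exists_isAutOR_eq_coeComplex u
  obtain ⟨S, hS, hSe₁, a, b, c, hSu⟩ := exists_isAutOR_fixing_e₁_eq_quat u
  exact ⟨exists_isATI_eq_smul_rone u,
    ⟨T, hT, hTu ▸ coeComplex_mem_span_e₀_e₁ z⟩,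
    ⟨S, hS, hSe₁, hSu ▸ quat_mem_span_e₀_e₁_e₂ a b c⟩⟩
end
end
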